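/- Let A ⊂ ℚ be a finite set of nonzero rationals with |AA| ≤ K|A|, and let u ∈ ℚ be nonzero. Then for every integer k ≥ 2, |(A+u)^{(k)}| ≥ |A|^{k−1} / ( K^k · (2·C(2k,2))^{Kk} ), where C(2k,2) = (2k)(2k−1)/2. -/

import Mathlib

open Finset Pointwise

/-- `(A+u)^{(k)} = {(a₁+u)⋯(a_k+u) : a₁,…,a_k ∈ A}`. -/
def shiftProdSet (k : ℕ) (A : Finset ℚ) (u : ℚ) : Finset ℚ :=
  (Fintype.piFinset fun _ : Fin k => A).image fun f => ∏ i, (f i + u)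

def vv (x : ℚ) : Nat.Primes → ℚ := fun p => (padicValRat p x : ℚ)

lemma vv_mul {x y : ℚ} (hx : x ≠ 0) (hy : y ≠ 0) : vv (x * y) = vv x + vv y := by
  funext p
  have := Fact.mk p.2
  simp [vv, padicValRat.mul hx hy]

lemma vv_neg (x : ℚ) : vv (-x) = vv x := by
  funext p
  simp [vv]

lemma vv_of_abs {x y : ℚ} (h : |x| = |y|) : vv x = vv y := by
  rcases abs_eq_abs.1 h with h | h
  · rw [h]
  · rw [h, vv_neg]

lemma abs_of_vv {x y : ℚ} (hx : x ≠ 0) (hy : y ≠ 0) (h : vv x = vv y) : |x| = |y| := by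
  set q := x / y with hq
  have hq0 : q ≠ 0 := div_ne_zero hx hy
  have hxq : x = q * y := by rw [hq]; field_simp
  have hv : vv q = 0 := by
    have := vv_mul hq0 hy
    rw [← hxq, h] at this
    simpa using this
  have hnd : q.num.natAbs = q.den := by
    rw [Nat.eq_iff_prime_padicValNat_eq _ _ (by simpa using hq0) q.den_nz]
    intro p hp
    have := congrFun hv ⟨p, hp⟩
    have this : padicValRat p q = 0 := by
      exact_mod_cast (show ((padicValRat p q : ℤ) : ℚ) = 0 from this)
    rw [padicValRat_def, padicValInt] at this
    omega
  have : |q| = 1 := by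
    rw [← Rat.num_div_den q, abs_div]
    have h1 : |(q.num : ℚ)| = (q.den : ℚ) := by
      rw [← hnd]; simp
    rw [h1]
    have : (q.den : ℚ) ≠ 0 := by simp
    simp
  rw [hxq, abs_mul, this, one_mul]

noncomputable def dimv (A : Finset ℚ) : ℕ :=
  Module.finrank ℚ (vectorSpan ℚ (vv '' (A : Set ℚ)))

instance (A : Finset ℚ) : FiniteDimensional ℚ (vectorSpan ℚ (vv '' (A : Set ℚ))) :=
  finiteDimensional_vectorSpan_of_finite ℚ (A.finite_toSet.image _)

lemma dimv_mono {A B : Finset ℚ} (h : A ⊆ B) : dimv A ≤ dimv B := by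
  apply Submodule.finrank_mono
  exact vectorSpan_mono ℚ (Set.image_mono (by exact_mod_cast h))

lemma freiman (n : ℕ) : ∀ (A : Finset ℚ), A.card = n → (0 : ℚ) ∉ A → A.Nonempty → 
    ∀ e ≤ dimv A, (e + 1) * A.card ≤ (A * A).card + e * (e + 1) := by
  induction n using Nat.strong_induction_on with
  | _ n ih =>
  intro A hn h0 hA e he
  classical
  have hne : ∀ x ∈ A, x ≠ 0 := fun x hx h => h0 (h ▸ hx)
  rcases Nat.eq_zero_or_pos e with rfl | hepos
  · obtain ⟨a, ha⟩ := hA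
    have : A.card ≤ (A * A).card := by
      exact Finset.card_le_card_mul_left_of_injective ha (mul_right_injective₀ (hne a ha))
    omega
  obtain ⟨a, ha, hmin⟩ := A.exists_min_image (fun x => |x|) hA
  set F := A.filter (fun x => |x| = |a|) with hF
  set A' := A.filter (fun x => |x| ≠ |a|) with hA'
  have hcard : F.card + A'.card = A.card := Finset.card_filter_add_card_filter_not _
  have haF : a ∈ F := by simp [hF, ha]
  have hFpos : 0 < F.card := Finset.card_pos.2 ⟨a, haF⟩
  have hlt : ∀ x ∈ A', |a| < |x| := fun x hx => by
    simp only [hA', mem_filter] at hx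
    exact lt_of_le_of_ne (hmin x hx.1) (Ne.symm hx.2)
  have hA'A : A' ⊆ A := filter_subset _ _
  have hFA : F ⊆ A := filter_subset _ _
  have h0' : (0 : ℚ) ∉ A' := fun h => h0 (hA'A h)
  have hapos : 0 < |a| := abs_pos.2 (hne a ha)
  have hFa : ∀ x ∈ F, |x| = |a| := fun x hx => (mem_filter.1 hx).2
  have himg : vv '' (A : Set ℚ) = insert (vv a) (vv '' (A' : Set ℚ)) := by
    ext w
    simp only [Set.mem_image, Set.mem_insert_iff, mem_coe]
    constructor
    · rintro ⟨x, hx, rfl⟩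
      by_cases hxa : |x| = |a|
      · left; exact vv_of_abs hxa
      · right; exact ⟨x, by simp [hA', hx, hxa], rfl⟩
    · rintro (rfl | ⟨x, hx, rfl⟩)
      · exact ⟨a, ha, rfl⟩
      · exact ⟨x, hA'A hx, rfl⟩
  have hA'ne : A'.Nonempty := by
    by_contra hcon
    rw [Finset.not_nonempty_iff_eq_empty] at hcon
    have : dimv A = 0 := by
      simp [dimv, himg, hcon]
    omega
  have ihA' := ih A'.card (by omega) A' rfl h0' hA'ne
  by_cases hmem : vv a ∈ affineSpan ℚ (vv '' (A' : Set ℚ))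
  · -- same dimension
    have hdim : dimv A = dimv A' := by
      unfold dimv
      rw [himg, ← direction_affineSpan, affineSpan_insert_eq_affineSpan ℚ hmem, direction_affineSpan]
    have h1 := ihA' e (hdim ▸ he)
    -- irreducible levels
    set I : Finset ℚ := (A'.image (fun x => |x|)).filter
      (fun t => ∀ y ∈ A', ∀ z ∈ A', |a| * t ≠ |y| * |z|) with hI
    have hspan : ∀ m : ℕ, ∀ b ∈ A', (A'.filter (fun x => |x| < |b|)).card ≤ m → 
        vv b - vv a ∈ Submodule.span ℚ (((I.image (fun t => vv t - vv a)) : Finset (Nat.Primes → ℚ)) : Set (Nat.Primes → ℚ)) := by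
      intro m
      induction m using Nat.strong_induction_on with
      | _ m ihm =>
      intro b hb hbm
      by_cases hbI : |b| ∈ I
      · apply Submodule.subset_span
        rw [mem_coe, mem_image]
        exact ⟨|b|, hbI, by rw [vv_of_abs (abs_abs b)]⟩
      · simp only [hI, mem_filter, mem_image, not_and, not_forall, not_not] at hbI
        obtain ⟨y, hy, z, hz, hyz⟩ := hbI ⟨b, hb, rfl⟩
        have hbpos := hapos.trans (hlt b hb)
        have hyb : |y| < |b| := by
          have := hlt z hz
          by_contra hcon
          push Not at hcon
          nlinarith
        have hzb : |z| < |b| := by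
          have := hlt y hy
          by_contra hcon
          push Not at hcon
          nlinarith
        have key : ∀ y ∈ A', |y| < |b| → (A'.filter (fun x => |x| < |y|)).card < m := by
          intro y hy hyb
          refine lt_of_lt_of_le (Finset.card_lt_card ?_) hbm
          rw [Finset.ssubset_iff_of_subset]
          · exact ⟨y, by simp [hy, hyb], by simp⟩
          · intro x hx
            simp only [mem_filter] at hx ⊢
            exact ⟨hx.1, hx.2.trans hyb⟩
        have e1 := ihm _ (key y hy hyb) y hy le_rfl
        have e2 := ihm _ (key z hz hzb) z hz le_rfl
        have e3 : vv a + vv b = vv y + vv z := by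
          rw [← vv_mul (hne a ha) (hne b (hA'A hb)), ← vv_mul (hne y (hA'A hy)) (hne z (hA'A hz))]
          apply vv_of_abs
          rw [abs_mul, abs_mul, hyz]
        have e4 : vv b - vv a = (vv y - vv a) + (vv z - vv a) := by
          have : vv b = vv y + vv z - vv a := by rw [← e3]; abel
          rw [this]; abel
        rw [e4]
        exact Submodule.add_mem _ e1 e2
    have hdI : dimv A ≤ I.card := by
      have hle : vectorSpan ℚ (vv '' (A : Set ℚ)) ≤ Submodule.span ℚ (((I.image (fun t => vv t - vv a)) : Finset (Nat.Primes → ℚ)) : Set (Nat.Primes → ℚ)) := by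
        rw [vectorSpan_eq_span_vsub_set_right ℚ (Set.mem_image_of_mem vv (mem_coe.2 ha)), Submodule.span_le]
        rintro _ ⟨_, ⟨x, hx, rfl⟩, rfl⟩
        by_cases hxa : |x| = |a|
        · simp [vv_of_abs hxa]
        · exact hspan _ x (by simp only [hA', mem_filter]; exact ⟨hx, hxa⟩) le_rfl
      exact (Submodule.finrank_mono hle).trans ((finrank_span_finset_le_card _).trans card_image_le)
    -- representatives
    have hIr : ∀ t ∈ I, ∃ x ∈ A', |x| = t := by
      intro t ht
      simp only [hI, mem_filter, mem_image] at ht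
      exact ht.1
    choose! r hr using hIr
    have hIneg : ∀ t ∈ I, ∀ y ∈ A', ∀ z ∈ A', |a| * t ≠ |y| * |z| := by
      intro t ht
      simp only [hI, mem_filter, mem_image] at ht
      exact ht.2
    set R : Finset ℚ := insert a (I.image r) with hR
    have hRinj : Set.InjOn r (I : Set ℚ) := by
      intro s hs t ht hst
      rw [← (hr s hs).2, ← (hr t ht).2, hst]
    have hRcard : R.card = I.card + 1 := by
      rw [hR, card_insert_of_notMem, card_image_of_injOn hRinj]
      intro hcon
      obtain ⟨t, ht, hta⟩ := mem_image.1 hcon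
      have := hlt _ (hr t ht).1
      rw [hta] at this
      exact lt_irrefl _ this
    have hRA : R ⊆ A := by
      intro x hx
      rw [hR, mem_insert] at hx
      rcases hx with rfl | hx
      · exact ha
      · obtain ⟨t, ht, rfl⟩ := mem_image.1 hx
        exact hA'A (hr t ht).1
    have hRabs : ∀ x ∈ R, ∀ y ∈ R, |x| = |y| → x = y := by
      intro x hx y hy hxy
      rw [hR, mem_insert] at hx hy
      rcases hx with rfl | hx <;> rcases hy with rfl | hy
      · rfl
      · obtain ⟨t, ht, rfl⟩ := mem_image.1 hy
        exact absurd hxy (hlt _ (hr t ht).1).ne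
      · obtain ⟨t, ht, rfl⟩ := mem_image.1 hx
        exact absurd hxy (hlt _ (hr t ht).1).ne'
      · obtain ⟨t, ht, rfl⟩ := mem_image.1 hx
        obtain ⟨s, hs, rfl⟩ := mem_image.1 hy
        rw [(hr t ht).2, (hr s hs).2] at hxy
        rw [hxy]
    have hFR : (F * R).card = F.card * R.card := by
      rw [card_mul_iff]
      rintro ⟨f, x⟩ hfx ⟨g, y⟩ hgy h
      simp only [Set.mem_prod, mem_coe] at hfx hgy
      simp only at h
      have hxy : x = y := by
        apply hRabs x hfx.2 y hgy.2
        have := congrArg abs h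
        rw [abs_mul, abs_mul, hFa f hfx.1, hFa g hgy.1] at this
        exact mul_left_cancel₀ hapos.ne' this
      subst hxy
      have := mul_right_cancel₀ (hne x (hRA hfx.2)) h
      rw [this]
    have hdisj : Disjoint (A' * A') (F * R) := by
      rw [Finset.disjoint_left]
      intro w hw hw'
      obtain ⟨y, hy, z, hz, rfl⟩ := mem_mul.1 hw
      obtain ⟨f, hf, x, hx, hfx⟩ := mem_mul.1 hw'
      have h2 := congrArg abs hfx
      rw [abs_mul, abs_mul, hFa f hf] at h2
      rw [hR, mem_insert] at hx
      rcases hx with rfl | hx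
      · have := hlt y hy
        have := hlt z hz
        nlinarith
      · obtain ⟨t, ht, rfl⟩ := mem_image.1 hx
        rw [(hr t ht).2] at h2
        exact hIneg t ht y hy z hz h2
    have hsub : (A' * A') ∪ (F * R) ⊆ A * A :=
      union_subset (mul_subset_mul hA'A hA'A) (mul_subset_mul hFA hRA)
    have h3 := card_le_card hsub
    rw [card_union_of_disjoint hdisj, hFR, hRcard] at h3
    have h4 : F.card * (e + 1) ≤ F.card * (I.card + 1) := Nat.mul_le_mul_left _ (by omega)
    rw [← hcard]
    nlinarith
  · -- dimension drop
    have hdim : dimv A ≤ dimv A' + 1 := by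
      unfold dimv
      rw [himg]
      exact finrank_vectorSpan_insert_le_set ℚ _ _
    obtain ⟨e, rfl⟩ : ∃ e', e = e' + 1 := ⟨e - 1, by omega⟩
    have h1 := ihA' e (by omega)
    have hsubv : ∀ x ∈ A', vv x ∈ affineSpan ℚ (vv '' (A' : Set ℚ)) := fun x hx =>
      subset_affineSpan _ _ (Set.mem_image_of_mem vv hx)
    have hd1 : Disjoint (A' * A') ((A').image (fun x => a * x)) := by
      rw [Finset.disjoint_left]
      intro w hw hw'
      obtain ⟨y, hy, z, hz, rfl⟩ := mem_mul.1 hw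
      obtain ⟨x, hx, hxw⟩ := mem_image.1 hw'
      have := congrArg vv hxw
      rw [vv_mul (hne a ha) (hne x (hA'A hx)), vv_mul (hne y (hA'A hy)) (hne z (hA'A hz))] at this
      apply hmem
      have h2 := AffineSubspace.smul_vsub_vadd_mem _ (1 : ℚ) (hsubv y hy) (hsubv x hx) (hsubv z hz)
      have h3 : vv a = ((1 : ℚ) • (vv y -ᵥ vv x)) +ᵥ (vv z) := by
        simp only [vsub_eq_sub, vadd_eq_add, one_smul]
        have : vv a = vv y + vv z - vv x := by rw [← this]; abel
        rw [this]; abel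
      rw [h3]; exact h2
    have hd2 : Disjoint (A' * A') (F.image (fun x => a * x)) := by
      rw [Finset.disjoint_left]
      intro w hw hw'
      obtain ⟨y, hy, z, hz, rfl⟩ := mem_mul.1 hw
      obtain ⟨x, hx, hxw⟩ := mem_image.1 hw'
      have h2 := congrArg abs hxw
      rw [abs_mul, abs_mul, hFa x hx] at h2
      have := hlt y hy
      have := hlt z hz
      nlinarith
    have hd3 : Disjoint ((A').image (fun x => a * x)) (F.image (fun x => a * x)) := by
      rw [Finset.disjoint_image (mul_right_injective₀ (hne a ha))]
      rw [Finset.disjoint_left]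
      intro x hx hx'
      exact (hlt x hx).ne' (hFa x hx')
    have hsub : (A' * A') ∪ (((A').image (fun x => a * x)) ∪ (F.image (fun x => a * x))) ⊆ A * A := by
      refine union_subset (mul_subset_mul hA'A hA'A) (union_subset ?_ ?_)
      · intro w hw
        obtain ⟨x, hx, rfl⟩ := mem_image.1 hw
        exact mul_mem_mul ha (hA'A hx)
      · intro w hw
        obtain ⟨x, hx, rfl⟩ := mem_image.1 hw
        exact mul_mem_mul ha (hFA hx)
    have h3 := card_le_card hsub
    rw [card_union_of_disjoint (disjoint_union_right.2 ⟨hd1, hd2⟩), card_union_of_disjoint hd3,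
      card_image_of_injective _ (mul_right_injective₀ (hne a ha)),
      card_image_of_injective _ (mul_right_injective₀ (hne a ha))] at h3
    have hF2 : F.card ≤ 2 := by
      have : F ⊆ {a, -a} := by
        intro x hx
        rcases abs_eq_abs.1 (hFa x hx) with h | h <;> simp [h]
      exact (card_le_card this).trans card_le_two
    rw [← hcard]
    nlinarith

lemma addChar_sum {ι H : Type} [AddCommGroup H] (ψ : AddChar H ℂ) (s : Finset ι) (f : ι → H) :
    ψ (∑ i ∈ s, f i) = ∏ i ∈ s, ψ (f i) := by
  classical
  induction s using Finset.induction_on with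
  | empty => simp
  | insert a s ha ih => rw [sum_insert ha, prod_insert ha, AddChar.map_add_eq_mul, ih]

section energy
variable {α H : Type} [DecidableEq α] [AddCommGroup H] [Fintype H] [DecidableEq H]

def sg (k : ℕ) (g : α → H) : Fin k ⊕ Fin k → α → H
  | Sum.inl _, a => g a
  | Sum.inr _, a => - g a

def sols (k : ℕ) (g : α → H) (X : Fin k ⊕ Fin k → Finset α) : Finset (Fin k ⊕ Fin k → α) :=
  (Fintype.piFinset X).filter (fun z => ∑ i, sg k g i (z i) = 0)

noncomputable def FF (g : α → H) (X : Finset α) (ψ : AddChar H ℂ) : ℂ := ∑ a ∈ X, ψ (g a)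

def JJ (k : ℕ) (g : α → H) (X : Finset α) : ℕ := (sols k g (fun _ => X)).card

noncomputable def LL (k : ℕ) (g : α → H) (X : Finset α) : ℝ := (JJ k g X : ℝ) ^ (1 / (k : ℝ))

lemma LL_nonneg (k : ℕ) (g : α → H) (X : Finset α) : 0 ≤ LL k g X := by
  unfold LL; positivity

lemma sols_card (k : ℕ) (g : α → H) (X : Fin k ⊕ Fin k → Finset α) :
    (Fintype.card H : ℂ) * (sols k g X).card =
      ∑ ψ : AddChar H ℂ, ∏ i, ∑ a ∈ X i, ψ (sg k g i a) := by
  simp_rw [Finset.prod_univ_sum]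
  rw [Finset.sum_comm]
  have : ∀ z ∈ Fintype.piFinset X, ∑ ψ : AddChar H ℂ, ∏ i, ψ (sg k g i (z i)) =
      if ∑ i, sg k g i (z i) = 0 then (Fintype.card H : ℂ) else 0 := by
    intro z _
    rw [← AddChar.sum_apply_eq_ite]
    refine Finset.sum_congr rfl fun ψ _ => ?_
    rw [addChar_sum]
  rw [Finset.sum_congr rfl this, ← Finset.sum_filter, Finset.sum_const, nsmul_eq_mul, mul_comm]
  rfl

lemma sum_sg_inr (k : ℕ) (g : α → H) (X : Finset α) (ψ : AddChar H ℂ) (i : Fin k) :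
    ∑ a ∈ X, ψ (sg k g (Sum.inr i) a) = (starRingEnd ℂ) (FF g X ψ) := by
  simp only [sg, FF, AddChar.map_neg_eq_conj, map_sum]

lemma norm_sum_sg (k : ℕ) (g : α → H) (X : Finset α) (ψ : AddChar H ℂ) (i : Fin k ⊕ Fin k) :
    ‖∑ a ∈ X, ψ (sg k g i a)‖ = ‖FF g X ψ‖ := by
  rcases i with i | i
  · rfl
  · rw [sum_sg_inr, RCLike.norm_conj]

lemma JJ_eq (k : ℕ) (g : α → H) (X : Finset α) :
    (Fintype.card H : ℝ) * JJ k g X = ∑ ψ : AddChar H ℂ, ‖FF g X ψ‖ ^ (2 * k) := by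
  have h := sols_card k g (fun _ => X)
  have h2 : ∀ ψ : AddChar H ℂ, ∏ i : Fin k ⊕ Fin k, ∑ a ∈ X, ψ (sg k g i a) =
      ((‖FF g X ψ‖ ^ (2 * k) : ℝ) : ℂ) := by
    intro ψ
    rw [Fintype.prod_sum_type]
    simp only [sum_sg_inr]
    have : ∀ i : Fin k, ∑ a ∈ X, ψ (sg k g (Sum.inl i) a) = FF g X ψ := fun _ => rfl
    simp only [this, Finset.prod_const, Finset.card_univ, Fintype.card_fin]
    rw [← mul_pow, Complex.mul_conj, Complex.normSq_eq_norm_sq]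
    push_cast
    rw [pow_mul]
  simp only [h2] at h
  unfold JJ
  exact_mod_cast h

lemma sols_le (k : ℕ) (g : α → H) (X : Fin k ⊕ Fin k → Finset α) :
    (Fintype.card H : ℝ) * (sols k g X).card ≤ ∑ ψ : AddChar H ℂ, ∏ i, ‖FF g (X i) ψ‖ := by
  have h := congrArg norm (sols_card k g X)
  rw [norm_mul, Complex.norm_natCast, Complex.norm_natCast] at h
  rw [h]
  refine (norm_sum_le _ _).trans (Finset.sum_le_sum fun ψ _ => ?_)
  rw [norm_prod]
  exact Finset.prod_le_prod (fun _ _ => norm_nonneg _) (fun i _ => (norm_sum_sg k g _ ψ i).le)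

lemma holder_FF (k : ℕ) (hk : 2 ≤ k) (g : α → H) (X Y : Finset α) :
    ∑ ψ : AddChar H ℂ, ‖FF g X ψ‖ ^ 2 * ‖FF g Y ψ‖ ^ (2 * k - 2) ≤
      (Fintype.card H : ℝ) * (LL k g X * (JJ k g Y : ℝ) ^ (1 - 1 / (k : ℝ))) := by
  have hk1 : (1 : ℝ) < k := by exact_mod_cast hk
  have hk0 : (0 : ℝ) < k := by linarith
  have hk2 : (0 : ℝ) < k - 1 := by linarith
  have hpq := Real.HolderConjugate.conjExponent hk1
  have h := Real.inner_le_Lp_mul_Lq_of_nonneg (Finset.univ : Finset (AddChar H ℂ)) hpq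
    (f := fun ψ => ‖FF g X ψ‖ ^ 2) (g := fun ψ => ‖FF g Y ψ‖ ^ (2 * k - 2))
    (fun _ _ => by positivity) (fun _ _ => by positivity)
  refine h.trans (le_of_eq ?_)
  have e1 : ∀ ψ : AddChar H ℂ, (‖FF g X ψ‖ ^ 2) ^ (k : ℝ) = ‖FF g X ψ‖ ^ (2 * k) := by
    intro ψ
    rw [Real.rpow_natCast, pow_mul]
  have e2 : ∀ ψ : AddChar H ℂ, (‖FF g Y ψ‖ ^ (2 * k - 2)) ^ (Real.conjExponent k) = ‖FF g Y ψ‖ ^ (2 * k) := by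
    intro ψ
    rw [← Real.rpow_natCast, ← Real.rpow_natCast, ← Real.rpow_mul (norm_nonneg _)]
    congr 1
    unfold Real.conjExponent
    rw [Nat.cast_sub (by omega)]
    push_cast
    field_simp
  have e3 : 1 / Real.conjExponent k = 1 - 1 / (k : ℝ) := by
    unfold Real.conjExponent
    field_simp
  simp only [e1, e2, e3]
  rw [← JJ_eq, ← JJ_eq, Real.mul_rpow (by positivity) (by positivity),
    Real.mul_rpow (by positivity) (by positivity)]
  unfold LL
  have hH : (0 : ℝ) < Fintype.card H := by exact_mod_cast Fintype.card_pos
  have : (Fintype.card H : ℝ) ^ (1 / (k : ℝ)) * (Fintype.card H : ℝ) ^ (1 - 1 / (k : ℝ)) = Fintype.card H := by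
    rw [← Real.rpow_add hH]; simp
  linear_combination ((JJ k g X : ℝ) ^ (1 / (k : ℝ)) * (JJ k g Y : ℝ) ^ (1 - 1 / (k : ℝ))) * this

lemma self_improve (k : ℕ) (hk : 2 ≤ k) (J B : ℝ) (hJ : 0 ≤ J) (hB : 0 ≤ B)
    (h : J ≤ B * J ^ (1 - 1 / (k : ℝ))) : J ^ (1 / (k : ℝ)) ≤ B := by
  have hk0 : (0 : ℝ) < k := by positivity
  rcases hJ.eq_or_lt with rfl | hJ
  · rw [Real.zero_rpow (by positivity)]; exact hB
  · have h1 : J ^ (1 / (k : ℝ)) * J ^ (1 - 1 / (k : ℝ)) = J := by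
      rw [← Real.rpow_add hJ]; simp
    have h2 : 0 < J ^ (1 - 1 / (k : ℝ)) := by positivity
    rw [← h1] at h
    rw [h1] at h
    by_contra hcon
    push Not at hcon
    nlinarith

lemma LL_split (k : ℕ) (hk : 2 ≤ k) (g : α → H) (X X₁ X₂ : Finset α) (hX : X = X₁ ∪ X₂)
    (hd : Disjoint X₁ X₂) : LL k g X ≤ 2 * (LL k g X₁ + LL k g X₂) := by
  have hH : (0 : ℝ) < Fintype.card H := by exact_mod_cast Fintype.card_pos
  apply self_improve k hk _ _ (by positivity)
    (by have := LL_nonneg k g X₁; have := LL_nonneg k g X₂; positivity)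
  refine le_of_mul_le_mul_left ?_ hH
  rw [JJ_eq]
  have h1 := holder_FF k hk g X₁ X
  have h2 := holder_FF k hk g X₂ X
  have h3 : ∀ ψ : AddChar H ℂ, ‖FF g X ψ‖ ^ (2 * k) ≤ 
      2 * (‖FF g X₁ ψ‖ ^ 2 * ‖FF g X ψ‖ ^ (2 * k - 2) + ‖FF g X₂ ψ‖ ^ 2 * ‖FF g X ψ‖ ^ (2 * k - 2)) := by
    intro ψ
    have e : FF g X ψ = FF g X₁ ψ + FF g X₂ ψ := by
      unfold FF; rw [hX, Finset.sum_union hd]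
    have e2 : ‖FF g X ψ‖ ^ (2 * k) = ‖FF g X ψ‖ ^ 2 * ‖FF g X ψ‖ ^ (2 * k - 2) := by
      rw [← pow_add]; congr 1; omega
    rw [e2, ← add_mul, ← mul_assoc]
    apply mul_le_mul_of_nonneg_right _ (by positivity)
    have := norm_add_le (FF g X₁ ψ) (FF g X₂ ψ)
    rw [← e] at this
    nlinarith [norm_nonneg (FF g X ψ), sq_nonneg (‖FF g X₁ ψ‖ - ‖FF g X₂ ψ‖)]
  refine (Finset.sum_le_sum fun ψ _ => h3 ψ).trans ?_
  rw [← Finset.mul_sum, Finset.sum_add_distrib]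
  nlinarith

lemma LL_pairs {β : Type} [DecidableEq β] (k : ℕ) (hk : 2 ≤ k) (g : α → H) (X : Finset α) (l : α → β)
    (h : ∀ z ∈ sols k g (fun _ => X), ∃ s t, s ≠ t ∧ l (z s) = l (z t)) :
    LL k g X ≤ (Nat.choose (2 * k) 2 : ℝ) * ∑ b ∈ X.image l, LL k g (X.filter (fun a => l a = b)) := by
  have hH : (0 : ℝ) < Fintype.card H := by exact_mod_cast Fintype.card_pos
  have hB : 0 ≤ ∑ b ∈ X.image l, LL k g (X.filter (fun a => l a = b)) :=
    Finset.sum_nonneg fun _ _ => LL_nonneg _ _ _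
  apply self_improve k hk _ _ (by positivity) (by positivity)
  set PS := (Finset.univ : Finset (Fin k ⊕ Fin k)).powersetCard 2 with hPS
  have hPScard : PS.card = Nat.choose (2 * k) 2 := by
    rw [hPS, Finset.card_powersetCard]; simp [two_mul]
  let Y : Finset (Fin k ⊕ Fin k) → β → (Fin k ⊕ Fin k) → Finset α := fun P b i =>
    if i ∈ P then X.filter (fun a => l a = b) else X
  have hsub : sols k g (fun _ => X) ⊆ PS.biUnion fun P => (X.image l).biUnion fun b => sols k g (Y P b) := by
    intro z hz
    obtain ⟨s, t, hst, hl⟩ := h z hz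
    simp only [sols, mem_filter, Fintype.mem_piFinset] at hz
    simp only [mem_biUnion]
    refine ⟨{s, t}, ?_, l (z s), mem_image_of_mem _ (hz.1 s), ?_⟩
    · rw [hPS, mem_powersetCard]
      exact ⟨subset_univ _, card_pair hst⟩
    · simp only [sols, mem_filter, Fintype.mem_piFinset]
      refine ⟨fun i => ?_, hz.2⟩
      simp only [Y]
      split_ifs with hi
      · simp only [mem_insert, mem_singleton] at hi
        rcases hi with rfl | rfl
        · simp [hz.1]
        · simp [hz.1, hl]
      · exact hz.1 i
  have hcard : (JJ k g X : ℝ) ≤ ∑ P ∈ PS, ∑ b ∈ X.image l, ((sols k g (Y P b)).card : ℝ) := by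
    have := (card_le_card hsub).trans (card_biUnion_le.trans (Finset.sum_le_sum fun P _ => card_biUnion_le))
    unfold JJ
    exact_mod_cast this
  refine hcard.trans ?_
  have hone : ∀ P ∈ PS, ∀ b ∈ X.image l, ((sols k g (Y P b)).card : ℝ) ≤ 
      LL k g (X.filter (fun a => l a = b)) * (JJ k g X : ℝ) ^ (1 - 1 / (k : ℝ)) := by
    intro P hP b _
    have hP2 : P.card = 2 := (mem_powersetCard.1 hP).2
    refine le_of_mul_le_mul_left ?_ hH
    refine (sols_le k g (Y P b)).trans (le_trans (le_of_eq ?_) (holder_FF k hk g _ X))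
    refine Finset.sum_congr rfl fun ψ _ => ?_
    have : ∀ i, ‖FF g (Y P b i) ψ‖ = if i ∈ P then ‖FF g (X.filter (fun a => l a = b)) ψ‖ else ‖FF g X ψ‖ := by
      intro i; simp only [Y]; split_ifs <;> rfl
    simp only [this]
    rw [Finset.prod_ite, Finset.prod_const, Finset.prod_const]
    congr 2
    · simp [hP2]
    · have : (univ.filter (fun i => i ∉ P)) = Pᶜ := by ext; simp
      rw [this, card_compl, hP2]; simp [two_mul]
  refine (Finset.sum_le_sum fun P hP => Finset.sum_le_sum fun b hb => hone P hP b hb).trans ?_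
  rw [Finset.sum_const, nsmul_eq_mul, hPScard, ← Finset.sum_mul, mul_assoc]

lemma LL_le_card (k : ℕ) (hk : 2 ≤ k) (g : α → H) (X : Finset α) : LL k g X ≤ (X.card : ℝ) ^ 2 := by
  have : JJ k g X ≤ X.card ^ (2 * k) := by
    unfold JJ sols
    refine (card_filter_le _ _).trans ?_
    rw [Fintype.card_piFinset]
    simp [two_mul]
  have h2 : (JJ k g X : ℝ) ≤ ((X.card : ℝ) ^ 2) ^ k := by
    rw [← pow_mul]; exact_mod_cast this
  unfold LL
  calc (JJ k g X : ℝ) ^ (1 / (k : ℝ)) ≤ (((X.card : ℝ) ^ 2) ^ k) ^ (1 / (k : ℝ)) := by gcongr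
    _ = _ := by
      rw [one_div, Real.pow_rpow_inv_natCast (by positivity) (by omega)]

end energy

lemma prod_near_one (p : ℕ) [Fact p.Prime] {ι : Type} [DecidableEq ι] (T : Finset ι) (b : ι → ℚ) (c : ℚ)
    (hc0 : 0 < c) (hc1 : c ≤ 1) (h : ∀ i ∈ T, padicNorm p (b i) < c) :
    padicNorm p (∏ i ∈ T, (1 + b i) - 1) < c := by
  induction T using Finset.induction_on with
  | empty => simpa using hc0
  | insert a s ha ih =>
    have h1 := ih fun i hi => h i (mem_insert_of_mem hi)
    have h2 := h a (mem_insert_self _ _)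
    rw [prod_insert ha]
    set P := ∏ i ∈ s, (1 + b i)
    have e : (1 + b a) * P - 1 = ((P - 1) + b a) + b a * (P - 1) := by ring
    rw [e]
    refine padicNorm.nonarchimedean.trans_lt (max_lt (padicNorm.nonarchimedean.trans_lt (max_lt h1 h2)) ?_)
    rw [padicNorm.mul]
    have := padicNorm.nonneg (p := p) (b a)
    have := padicNorm.nonneg (p := p) (P - 1)
    nlinarith

lemma no_unique_min (p : ℕ) [Fact p.Prime] (x X Y : ℚ) (hx0 : x ≠ 0) (hx1 : padicNorm p x ≤ 1)
    (hX : padicNorm p (X - 1) < padicNorm p x) (hY : padicNorm p (Y - 1) < padicNorm p x)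
    (h : (1 + x) * X = Y) : False := by
  have hpos : 0 < padicNorm p x := lt_of_le_of_ne (padicNorm.nonneg _) (Ne.symm (padicNorm.nonzero hx0))
  have e : x = ((Y - 1) - (X - 1)) - x * (X - 1) := by rw [← h]; ring
  have : padicNorm p (((Y - 1) - (X - 1)) - x * (X - 1)) < padicNorm p x := by
    refine padicNorm.sub.trans_lt (max_lt (padicNorm.sub.trans_lt (max_lt hY hX)) ?_)
    rw [padicNorm.mul]
    nlinarith
  rw [← e] at this
  exact lt_irrefl _ this

lemma two_min (p : ℕ) [Fact p.Prime] (k : ℕ) (hk : 2 ≤ k) (b : Fin k ⊕ Fin k → ℚ)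
    (hb0 : ∀ i, b i ≠ 0) (hb1 : ∀ i, padicNorm p (b i) ≤ 1)
    (h : ∏ i, (1 + b (Sum.inl i)) = ∏ i, (1 + b (Sum.inr i))) :
    ∃ s t, s ≠ t ∧ padicNorm p (b s) = padicNorm p (b t) := by
  by_contra hcon
  push Not at hcon
  obtain ⟨s, -, hs⟩ := (univ : Finset (Fin k ⊕ Fin k)).exists_max_image (fun i => padicNorm p (b i))
    ⟨Sum.inl ⟨0, by omega⟩, mem_univ _⟩
  have hlt : ∀ t, t ≠ s → padicNorm p (b t) < padicNorm p (b s) := fun t ht =>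
    lt_of_le_of_ne (hs t (mem_univ _)) (hcon t s ht)
  have hpos : 0 < padicNorm p (b s) := lt_of_le_of_ne (padicNorm.nonneg _) (Ne.symm (padicNorm.nonzero (hb0 s)))
  rcases s with i0 | i0
  · rw [← Finset.mul_prod_erase univ _ (mem_univ i0)] at h
    exact no_unique_min p _ _ _ (hb0 _) (hb1 _)
      (prod_near_one p (univ.erase i0) (fun i => b (Sum.inl i)) _ hpos (hb1 _)
        (fun i hi => hlt _ (by simpa using (mem_erase.1 hi).1)))
      (prod_near_one p univ (fun i => b (Sum.inr i)) _ hpos (hb1 _)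
        (fun i hi => hlt _ (by simp))) h
  · rw [← Finset.mul_prod_erase univ (fun i => 1 + b (Sum.inr i)) (mem_univ i0)] at h
    exact no_unique_min p _ _ _ (hb0 _) (hb1 _)
      (prod_near_one p (univ.erase i0) (fun i => b (Sum.inr i)) _ hpos (hb1 _)
        (fun i hi => hlt _ (by simpa using (mem_erase.1 hi).1)))
      (prod_near_one p univ (fun i => b (Sum.inl i)) _ hpos (hb1 _)
        (fun i hi => hlt _ (by simp))) h.symm

lemma exists_model {α G : Type} [DecidableEq α] [AddCommGroup G] (A : Finset α) (g : α → G) (k : ℕ) :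
    ∃ (H : Type) (_ : AddCommGroup H) (_ : Fintype H) (_ : DecidableEq H) (f : α → H),
      ∀ x y : Fin k → α, (∀ i, x i ∈ A) → (∀ i, y i ∈ A) → 
        (∑ i, f (x i) = ∑ i, f (y i) ↔ ∑ i, g (x i) = ∑ i, g (y i)) := by
  classical
  let S : Finset G := ((Fintype.piFinset fun _ : Fin k => A) ×ˢ (Fintype.piFinset fun _ : Fin k => A)).image
    (fun z => ∑ i, g (z.1 i) - ∑ i, g (z.2 i))
  have hc : ∀ s : G, ∃ c : G →+ AddCircle (1 : ℚ), s ≠ 0 → c s ≠ 0 := by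
    intro s
    by_cases hs : s = 0
    · exact ⟨0, fun h => absurd hs h⟩
    · obtain ⟨c, hc⟩ := CharacterModule.exists_character_apply_ne_zero_of_ne_zero hs
      exact ⟨c, fun _ => hc⟩
  choose c hc using hc
  let φ : G →+ (S → AddCircle (1 : ℚ)) := AddMonoidHom.pi fun s => c s.1
  let T : Set (S → AddCircle (1 : ℚ)) := (fun a => φ (g a)) '' (A : Set α)
  have hTfin : Finite T := (A.finite_toSet.image _)
  let H := AddSubgroup.closure T
  have hfg : AddGroup.FG H := AddGroup.closure_finite_fg T
  have htor : IsAddTorsion (S → AddCircle (1 : ℚ)) := by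
    intro x
    apply IsOfFinAddOrder.pi
    intro i
    obtain ⟨q, hq⟩ := QuotientAddGroup.mk_surjective (x i)
    rw [← hq, isOfFinAddOrder_iff_nsmul_eq_zero]
    refine ⟨q.den, q.den_pos, ?_⟩
    change ((q.den • q : ℚ) : AddCircle (1 : ℚ)) = 0
    rw [AddCircle.coe_eq_zero_iff]
    refine ⟨q.num, ?_⟩
    simp [mul_comm]
  have hfin : Finite H := AddCommGroup.finite_of_fg_isAddTorsion H (htor.addSubgroup H)
  let f : α → H := fun a => if ha : a ∈ A then ⟨φ (g a), AddSubgroup.subset_closure ⟨a, ha, rfl⟩⟩ else 0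
  refine ⟨H, inferInstance, Fintype.ofFinite H, inferInstance, f, ?_⟩
  intro x y hx hy
  have hf : ∀ x : Fin k → α, (∀ i, x i ∈ A) → ((∑ i, f (x i) : H) : S → AddCircle (1 : ℚ)) = φ (∑ i, g (x i)) := by
    intro x hx
    rw [AddSubgroup.val_finset_sum, map_sum]
    refine Finset.sum_congr rfl fun i _ => ?_
    simp [f, hx i]
  rw [← Subtype.coe_inj, hf x hx, hf y hy]
  constructor
  · intro h
    by_contra hne
    have hne' : ∑ i, g (x i) - ∑ i, g (y i) ≠ 0 := sub_ne_zero.2 hne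
    have hS : ∑ i, g (x i) - ∑ i, g (y i) ∈ S := by
      refine mem_image.2 ⟨(x, y), ?_, rfl⟩
      simp [hx, hy]
    apply hc _ hne'
    have h2 : φ (∑ i, g (x i) - ∑ i, g (y i)) = 0 := by rw [map_sub, h, sub_self]
    exact congrFun h2 ⟨_, hS⟩
  · intro h; rw [h]

lemma padic_level {p : Nat.Primes} {x y : ℚ} (hx : x ≠ 0) (hy : y ≠ 0)
    (h : padicNorm p x = padicNorm p y) : vv x p = vv y p := by
  have hp1 : (1 : ℚ) < (p : ℕ) := by exact_mod_cast p.2.one_lt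
  rw [padicNorm.eq_zpow_of_nonzero hx, padicNorm.eq_zpow_of_nonzero hy] at h
  have := zpow_right_injective₀ (by linarith) hp1.ne' h
  simp only [vv]
  have h2 : padicValRat p x = padicValRat p y := by simpa using this
  rw [h2]

lemma dimv_fiber (X Y : Finset ℚ) (hYX : Y ⊆ X) (p : Nat.Primes) (hY : ∀ x ∈ Y, ∀ y ∈ Y, vv x p = vv y p)
    (hX : ∃ x ∈ X, ∃ y ∈ X, vv x p ≠ vv y p) : dimv Y < dimv X := by
  apply Submodule.finrank_lt_finrank_of_lt
  refine lt_of_le_of_ne (vectorSpan_mono ℚ (Set.image_mono (by exact_mod_cast hYX))) ?_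
  intro heq
  obtain ⟨x, hx, y, hy, hxy⟩ := hX
  have h1 : vectorSpan ℚ (vv '' (Y : Set ℚ)) ≤ LinearMap.ker (LinearMap.proj (R := ℚ) (φ := fun _ : Nat.Primes => ℚ) p) := by
    rw [vectorSpan, Submodule.span_le]
    rintro _ ⟨_, ⟨a, ha, rfl⟩, _, ⟨b, hb, rfl⟩, rfl⟩
    simp [hY a ha b hb]
  have h2 : vv x -ᵥ vv y ∈ vectorSpan ℚ (vv '' (X : Set ℚ)) :=
    vsub_mem_vectorSpan ℚ (Set.mem_image_of_mem _ hx) (Set.mem_image_of_mem _ hy)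
  rw [← heq] at h2
  have h3 := h1 h2
  simp at h3
  exact hxy (sub_eq_zero.1 h3)

section main
variable {H : Type} [AddCommGroup H] [Fintype H] [DecidableEq H]

lemma LL_base (k : ℕ) (hk : 2 ≤ k) (f : ℚ → H) (X : Finset ℚ) (h0 : (0 : ℚ) ∉ X)
    (h : ∀ x ∈ X, ∀ y ∈ X, vv x = vv y) : LL k f X ≤ 2 * X.card := by
  have hne : ∀ x ∈ X, x ≠ 0 := fun x hx h => h0 (h ▸ hx)
  have h2 : X.card ≤ 2 := by
    rcases X.eq_empty_or_nonempty with rfl | ⟨a, ha⟩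
    · simp
    · have : X ⊆ {a, -a} := by
        intro x hx
        rcases abs_eq_abs.1 (abs_of_vv (hne x hx) (hne a ha) (h x hx a ha)) with h | h <;> simp [h]
      exact (card_le_card this).trans card_le_two
  have h3 := LL_le_card k hk f X
  have h4 : (X.card : ℝ) ≤ 2 := by exact_mod_cast h2
  have h5 : (0 : ℝ) ≤ X.card := by positivity
  nlinarith

lemma LL_half (k : ℕ) (hk : 2 ≤ k) (f : ℚ → H) (X : Finset ℚ) (p : Nat.Primes) (D : ℝ)
    (hD : ∀ b, LL k f (X.filter (fun a => padicNorm p a = b)) ≤ D * (X.filter (fun a => padicNorm p a = b)).card)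
    (h : ∀ z ∈ sols k f (fun _ => X), ∃ s t, s ≠ t ∧ padicNorm p (z s) = padicNorm p (z t)) :
    LL k f X ≤ (Nat.choose (2 * k) 2 : ℝ) * (D * X.card) := by
  refine (LL_pairs k hk f X (padicNorm p) h).trans ?_
  apply mul_le_mul_of_nonneg_left _ (by positivity)
  refine (Finset.sum_le_sum fun b _ => hD b).trans ?_
  rw [← Finset.mul_sum, card_eq_sum_card_image (padicNorm p) X]
  push_cast
  exact le_rfl

lemma LL_bound (k : ℕ) (hk : 2 ≤ k) (f : ℚ → H) (A : Finset ℚ) (h0 : (0 : ℚ) ∉ A) (u : ℚ) (hu : u ≠ 0)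
    (hf : ∀ x y : Fin k → ℚ, (∀ i, x i ∈ A) → (∀ i, y i ∈ A) → ∑ i, f (x i) = ∑ i, f (y i) →
      (∏ i, x i = ∏ i, y i ∧ ∏ i, (x i + u) = ∏ i, (y i + u))) (d : ℕ) :
    ∀ X ⊆ A, dimv X ≤ d → LL k f X ≤ (2 * (Nat.choose (2 * k) 2 : ℝ)) ^ d * 2 * X.card := by
  have hC1 : (1 : ℝ) ≤ (Nat.choose (2 * k) 2 : ℝ) := by
    exact_mod_cast Nat.choose_pos (by omega : 2 ≤ 2 * k)
  have hne : ∀ x ∈ A, x ≠ 0 := fun x hx h => h0 (h ▸ hx)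
  induction d with
  | zero =>
    intro X hXA hd
    rw [pow_zero, one_mul]
    apply LL_base k hk f X (fun h => h0 (hXA h))
    intro x hx y hy
    have h1 : vectorSpan ℚ (vv '' (X : Set ℚ)) = ⊥ := by
      rw [← Submodule.finrank_eq_zero]
      exact Nat.le_zero.1 hd
    have h2 : vv x -ᵥ vv y ∈ vectorSpan ℚ (vv '' (X : Set ℚ)) :=
      vsub_mem_vectorSpan ℚ (Set.mem_image_of_mem _ hx) (Set.mem_image_of_mem _ hy)
    rw [h1, Submodule.mem_bot] at h2
    exact sub_eq_zero.1 h2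
  | succ d ih =>
    intro X hXA hd
    by_cases hex : ∃ p : Nat.Primes, ∃ x ∈ X, ∃ y ∈ X, vv x p ≠ vv y p
    · obtain ⟨p, hp⟩ := hex
      have hpf : Fact (p : ℕ).Prime := ⟨p.2⟩
      have hu' : padicNorm p u ≠ 0 := padicNorm.nonzero hu
      have hfib : ∀ Y ⊆ X, ∀ b, LL k f (Y.filter (fun a => padicNorm p a = b)) ≤
          (2 * (Nat.choose (2 * k) 2 : ℝ)) ^ d * 2 * (Y.filter (fun a => padicNorm p a = b)).card := by
        intro Y hY b
        have hs : Y.filter (fun a => padicNorm p a = b) ⊆ X := (filter_subset _ _).trans hY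
        apply ih _ (hs.trans hXA)
        have := dimv_fiber X _ hs p (by
          intro x hx y hy
          rw [mem_filter] at hx hy
          exact padic_level (hne _ (hXA (hY hx.1))) (hne _ (hXA (hY hy.1))) (hx.2.trans hy.2.symm)) hp
        omega
      have hsol : ∀ Y ⊆ X, ∀ z ∈ sols k f (fun _ => Y), (∀ i, z i ∈ Y) ∧
          ∏ i, z (Sum.inl i) = ∏ i, z (Sum.inr i) ∧
            ∏ i, (z (Sum.inl i) + u) = ∏ i, (z (Sum.inr i) + u) := by
        intro Y hY z hz
        simp only [sols, mem_filter, Fintype.mem_piFinset] at hz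
        refine ⟨hz.1, hf _ _ (fun i => hXA (hY (hz.1 _))) (fun i => hXA (hY (hz.1 _))) ?_⟩
        have := hz.2
        rw [Fintype.sum_sum_type] at this
        simp only [sg, Finset.sum_neg_distrib] at this
        exact eq_of_sub_eq_zero (by rw [sub_eq_add_neg]; exact this)
      set X₁ := X.filter (fun a => padicNorm p (a / u) ≤ 1) with hX₁
      set X₂ := X.filter (fun a => ¬ padicNorm p (a / u) ≤ 1) with hX₂
      have hs1 : X₁ ⊆ X := filter_subset _ _
      have hs2 : X₂ ⊆ X := filter_subset _ _
      have hsplit := LL_split k hk f X X₁ X₂ (filter_union_filter_not_eq _ X).symm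
        (disjoint_filter_filter_not _ _ _)
      have b1 := LL_half k hk f X₁ p _ (hfib X₁ hs1) (by
        intro z hz
        obtain ⟨hzY, -, hz2⟩ := hsol X₁ hs1 z hz
        obtain ⟨s, t, hst, h⟩ := two_min p k hk (fun i => z i / u)
          (fun i => div_ne_zero (hne _ (hXA (hs1 (hzY i)))) hu)
          (fun i => (mem_filter.1 (hzY i)).2) (by
            have e : ∀ w : Fin k → ℚ, ∏ i, (1 + w i / u) = (∏ i, (w i + u)) / u ^ k := by
              intro w
              have : ∀ i, 1 + w i / u = (w i + u) / u := fun i => by field_simp; ring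
              simp [this, Finset.prod_div_distrib]
            rw [e, e, hz2])
        refine ⟨s, t, hst, ?_⟩
        simp only [padicNorm.div] at h
        exact (div_left_inj' hu').1 h)
      have b2 := LL_half k hk f X₂ p _ (hfib X₂ hs2) (by
        intro z hz
        obtain ⟨hzY, hz1, hz2⟩ := hsol X₂ hs2 z hz
        have hz0 : ∀ i, z i ≠ 0 := fun i => hne _ (hXA (hs2 (hzY i)))
        obtain ⟨s, t, hst, h⟩ := two_min p k hk (fun i => u / z i)
          (fun i => div_ne_zero hu (hz0 i))
          (fun i => by
            have h1 := (mem_filter.1 (hzY i)).2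
            push Not at h1
            have h2 : padicNorm p (u / z i) = (padicNorm p (z i / u))⁻¹ := by
              rw [padicNorm.div, padicNorm.div, inv_div]
            rw [h2]
            exact inv_le_one_of_one_le₀ h1.le) (by
            have e : ∀ w : Fin k → ℚ, (∀ i, w i ≠ 0) → ∏ i, (1 + u / w i) = (∏ i, (w i + u)) / ∏ i, w i := by
              intro w hw
              have : ∀ i, 1 + u / w i = (w i + u) / w i := fun i => by
                have := hw i
                field_simp
              simp [this, Finset.prod_div_distrib]
            rw [e _ fun i => hz0 _, e _ fun i => hz0 _, hz2, hz1])
        refine ⟨s, t, hst, ?_⟩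
        simp only [padicNorm.div] at h
        rw [div_eq_div_iff (padicNorm.nonzero (hz0 s)) (padicNorm.nonzero (hz0 t))] at h
        exact (mul_left_cancel₀ hu' h).symm)
      have hc : (X.card : ℝ) = X₁.card + X₂.card := by
        have : X₁.card + X₂.card = X.card := Finset.card_filter_add_card_filter_not _
        exact_mod_cast this.symm
      rw [hc, pow_succ]
      nlinarith
    · push Not at hex
      have := LL_base k hk f X (fun h => h0 (hXA h)) (fun x hx y hy => funext fun p => hex p x hx y hy)
      have h1 : (1 : ℝ) ≤ (2 * (Nat.choose (2 * k) 2 : ℝ)) ^ (d + 1) := one_le_pow₀ (by linarith)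
      have h5 : (0 : ℝ) ≤ X.card := by positivity
      nlinarith

end main

/-- energy upper bound plus Cauchy--Schwarz. -/
lemma energy_cs (k : ℕ) (hk : 2 ≤ k) (A : Finset ℚ) (h0 : (0 : ℚ) ∉ A) (u : ℚ) (hu : u ≠ 0)
    (hAu : -u ∉ A) : 
    (A.card : ℝ) ^ (2 * k) ≤ ((2 * (Nat.choose (2 * k) 2 : ℝ)) ^ dimv A * 2 * A.card) ^ k *
      ((((Fintype.piFinset fun _ : Fin k => A).image fun f => ∏ i, f i).card : ℝ) *
        ((shiftProdSet k A u).card : ℝ)) := by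
  classical
  have hne : ∀ x ∈ A, x ≠ 0 := fun x hx h => h0 (h ▸ hx)
  have hneu : ∀ x ∈ A, x + u ≠ 0 := fun x hx h => hAu (by rwa [← eq_neg_of_add_eq_zero_left h])
  let g : ℚ → Additive (ℚˣ × ℚˣ) := fun a =>
    if h : a ≠ 0 ∧ a + u ≠ 0 then Additive.ofMul (Units.mk0 a h.1, Units.mk0 (a + u) h.2) else 0
  have hg : ∀ x y : Fin k → ℚ, (∀ i, x i ∈ A) → (∀ i, y i ∈ A) → 
      (∑ i, g (x i) = ∑ i, g (y i) ↔ (∏ i, x i = ∏ i, y i ∧ ∏ i, (x i + u) = ∏ i, (y i + u))) := by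
    have h1 : ∀ x : Fin k → ℚ, (∀ i, x i ∈ A) → 
        (((∑ i, g (x i)).toMul.1 : ℚˣ) : ℚ) = ∏ i, x i ∧ (((∑ i, g (x i)).toMul.2 : ℚˣ) : ℚ) = ∏ i, (x i + u) := by
      intro x hx
      rw [toMul_sum, Prod.fst_prod, Prod.snd_prod, Units.coe_prod, Units.coe_prod]
      constructor <;> refine Finset.prod_congr rfl fun i _ => ?_ <;>
        simp [g, hne _ (hx i), hneu _ (hx i)]
    intro x y hx hy
    rw [← (h1 x hx).1, ← (h1 x hx).2, ← (h1 y hy).1, ← (h1 y hy).2, Units.val_inj, Units.val_inj,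
      ← Prod.ext_iff]
    exact (Equiv.injective Additive.toMul).eq_iff.symm
  obtain ⟨H, i1, i2, i3, f, hf⟩ := exists_model A g k
  have hf' := fun x y hx hy => (hf x y hx hy).trans (hg x y hx hy)
  have hL := LL_bound k hk f A h0 u hu (fun x y hx hy => (hf' x y hx hy).1) (dimv A) A subset_rfl le_rfl
  set B := (2 * (Nat.choose (2 * k) 2 : ℝ)) ^ dimv A * 2 * A.card with hB
  have hJ : (JJ k f A : ℝ) ≤ B ^ k := by
    have h1 : (JJ k f A : ℝ) = LL k f A ^ k := by
      unfold LL
      rw [one_div, Real.rpow_inv_natCast_pow (by positivity) (by omega)]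
    rw [h1]
    exact pow_le_pow_left₀ (LL_nonneg _ _ _) hL k
  set T := Fintype.piFinset fun _ : Fin k => A with hT
  let π : (Fin k → ℚ) → ℚ × ℚ := fun x => (∏ i, x i, ∏ i, (x i + u))
  have himg : (T.image π).card ≤ (T.image fun f => ∏ i, f i).card * (shiftProdSet k A u).card := by
    rw [← card_product]
    apply card_le_card
    intro w hw
    obtain ⟨x, hx, rfl⟩ := mem_image.1 hw
    exact mem_product.2 ⟨mem_image_of_mem _ hx, mem_image_of_mem _ hx⟩
  have hTc : T.card = A.card ^ k := by simp [hT]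
  have hsum : ∑ w ∈ T.image π, (T.filter (fun x => π x = w)).card ^ 2 = JJ k f A := by
    have e1 : ∀ w ∈ T.image π, (T.filter (fun x => π x = w)).card ^ 2 = 
        (((T ×ˢ T).filter (fun z => π z.1 = π z.2)).filter (fun z => π z.1 = w)).card := by
      intro w _
      rw [sq, ← card_product]
      congr 1
      ext ⟨x, y⟩
      simp only [mem_product, mem_filter]
      constructor
      · rintro ⟨⟨h1, h2⟩, h3, h4⟩; exact ⟨⟨⟨h1, h3⟩, h2.trans h4.symm⟩, h2⟩
      · rintro ⟨⟨⟨h1, h3⟩, h2⟩, h4⟩; exact ⟨⟨h1, h4⟩, h3, h2.symm.trans h4⟩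
    rw [Finset.sum_congr rfl e1, ← card_eq_sum_card_fiberwise]
    · unfold JJ
      refine Finset.card_bij' (fun z _ => Sum.elim z.1 z.2) (fun z _ => (fun i => z (Sum.inl i), fun i => z (Sum.inr i))) ?_ ?_ ?_ ?_
      · rintro ⟨x, y⟩ hz
        simp only [mem_filter, mem_product, hT, Fintype.mem_piFinset] at hz
        simp only [sols, mem_filter, Fintype.mem_piFinset]
        refine ⟨?_, ?_⟩
        · rintro (i | i)
          · exact hz.1.1 i
          · exact hz.1.2 i
        · rw [Fintype.sum_sum_type]
          simp only [sg, Sum.elim_inl, Sum.elim_inr, Finset.sum_neg_distrib]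
          rw [← sub_eq_add_neg, sub_eq_zero, hf' x y hz.1.1 hz.1.2]
          exact Prod.ext_iff.1 hz.2
      · intro z hz
        simp only [sols, mem_filter, Fintype.mem_piFinset] at hz
        simp only [mem_filter, mem_product, hT, Fintype.mem_piFinset]
        refine ⟨⟨fun i => hz.1 _, fun i => hz.1 _⟩, ?_⟩
        have h2 := hz.2
        rw [Fintype.sum_sum_type] at h2
        simp only [sg, Finset.sum_neg_distrib] at h2
        rw [← sub_eq_add_neg, sub_eq_zero, hf' _ _ (fun i => hz.1 _) (fun i => hz.1 _)] at h2
        exact Prod.ext_iff.2 h2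
      · rintro ⟨x, y⟩ _; rfl
      · intro z _
        funext i
        rcases i with i | i <;> rfl
    · intro z hz
      simp only [coe_filter, mem_product, Set.mem_setOf_eq] at hz
      exact mem_coe.2 (mem_image_of_mem _ hz.1.1)
  have hcs := sq_sum_le_card_mul_sum_sq (s := T.image π) (f := fun w => (T.filter (fun x => π x = w)).card)
  rw [← card_eq_sum_card_image, hsum, hTc, ← pow_mul, mul_comm k 2] at hcs
  have hcs' : (A.card : ℝ) ^ (2 * k) ≤ ((T.image π).card : ℝ) * JJ k f A := by exact_mod_cast hcs
  have himg' : ((T.image π).card : ℝ) ≤ ((T.image fun f => ∏ i, f i).card : ℝ) * (shiftProdSet k A u).card := by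
    exact_mod_cast himg
  calc _ ≤ _ := hcs'
    _ ≤ (((T.image fun f => ∏ i, f i).card : ℝ) * (shiftProdSet k A u).card) * B ^ k := by gcongr
    _ = _ := by ring

lemma pluennecke (A : Finset ℚ) (h0 : (0 : ℚ) ∉ A) (hA : A.Nonempty) (k : ℕ) (K : ℝ)
    (hK : ((A * A).card : ℝ) ≤ K * A.card) : 
    (((Fintype.piFinset fun _ : Fin k => A).image fun f => ∏ i, f i).card : ℝ) ≤ K ^ k * A.card := by
  classical
  have hne : ∀ x ∈ A, x ≠ 0 := fun x hx h => h0 (h ▸ hx)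
  let U : Finset ℚˣ := A.preimage (fun x : ℚˣ => (x : ℚ)) (Units.val_injective.injOn)
  have hUA : U.image (fun x : ℚˣ => (x : ℚ)) = A := by
    ext x
    simp only [mem_image, U, mem_preimage]
    constructor
    · rintro ⟨y, hy, rfl⟩; exact hy
    · intro hx; exact ⟨Units.mk0 x (hne x hx), hx, rfl⟩
  have hUc : U.card = A.card := by
    rw [← hUA, card_image_of_injective _ Units.val_injective]
  have hUne : U.Nonempty := by rw [← card_pos, hUc, card_pos]; exact hA
  have hUU : (U * U).card ≤ (A * A).card := by
    rw [← card_image_of_injective (U * U) Units.val_injective]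
    apply card_le_card
    intro w hw
    obtain ⟨w', hw', rfl⟩ := mem_image.1 hw
    obtain ⟨x, hx, y, hy, rfl⟩ := mem_mul.1 hw'
    rw [Units.val_mul]
    exact mul_mem_mul (mem_preimage.1 hx) (mem_preimage.1 hy)
  have hP := Finset.pluennecke_ruzsa_inequality_pow_mul hUne U k
  have hP' : ((U ^ k).card : ℝ) ≤ ((U * U).card / U.card : ℝ) ^ k * U.card := by
    have h := (NNRat.cast_le (K := ℝ)).2 hP
    push_cast at h
    exact h
  have hsub : ((Fintype.piFinset fun _ : Fin k => A).image fun f => ∏ i, f i).card ≤ (U ^ k).card := by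
    rw [← card_image_of_injective (U ^ k) Units.val_injective]
    apply card_le_card
    intro w hw
    obtain ⟨x, hx, rfl⟩ := mem_image.1 hw
    rw [Fintype.mem_piFinset] at hx
    refine mem_image.2 ⟨∏ i, Units.mk0 (x i) (hne _ (hx i)), ?_, ?_⟩
    · rw [Finset.mem_pow]
      refine ⟨fun i => ⟨Units.mk0 (x i) (hne _ (hx i)), mem_preimage.2 (hx i)⟩, ?_⟩
      rw [List.prod_ofFn]
    · simp [Units.coe_prod]
  have hApos : (0 : ℝ) < A.card := by exact_mod_cast card_pos.2 hA
  have hUU' : ((U * U).card : ℝ) ≤ (A * A).card := by exact_mod_cast hUU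
  calc _ ≤ ((U ^ k).card : ℝ) := by exact_mod_cast hsub
    _ ≤ _ := hP'
    _ ≤ K ^ k * A.card := by
      rw [hUc]
      gcongr
      rw [div_le_iff₀ hApos]
      linarith

/-- If `A ⊂ ℚ` is a finite set of nonzero rationals with `|AA| ≤ K|A|` and `u ≠ 0`, then
for every integer `k ≥ 2`, `|(A+u)^{(k)}| ≥ |A|^{k-1} / (K^k · (2·C(2k,2))^{Kk})`. -/
theorem shifted_product_chang_bound (A : Finset ℚ) (h0 : (0 : ℚ) ∉ A) (K : ℝ)
    (hK : ((A * A).card : ℝ) ≤ K * A.card) (u : ℚ) (hu : u ≠ 0)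
    (k : ℕ) (hk : 2 ≤ k) :
    (A.card : ℝ) ^ (k - 1) /
        (K ^ k * (2 * (Nat.choose (2 * k) 2 : ℝ)) ^ (K * k)) ≤
      ((shiftProdSet k A u).card : ℝ) := by
  rcases A.eq_empty_or_nonempty with rfl | hA
  · have : k - 1 ≠ 0 := by omega
    simp [this]
  have hN1 : (1 : ℝ) ≤ A.card := by exact_mod_cast card_pos.2 hA
  have hF := freiman A.card A rfl h0 hA
  have hF' : ∀ e : ℕ, e ≤ dimv A → ((e : ℝ) + 1) * A.card ≤ K * A.card + e * (e + 1) := by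
    intro e he
    have h1 : ((e : ℝ) + 1) * A.card ≤ (A * A).card + e * (e + 1) := by exact_mod_cast hF e he
    linarith
  have hK1 : 1 ≤ K := by
    have := hF' 0 (Nat.zero_le _)
    norm_num at this
    by_contra hcon
    push Not at hcon
    nlinarith
  set Q : ℝ := 2 * (Nat.choose (2 * k) 2 : ℝ) with hQ
  have hQ12 : 12 ≤ Q := by
    have h1 : Nat.choose 4 2 ≤ Nat.choose (2 * k) 2 := Nat.choose_le_choose 2 (by omega)
    have h2 : (6 : ℝ) ≤ (Nat.choose (2 * k) 2 : ℝ) := by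
      have : Nat.choose 4 2 = 6 := by decide
      rw [this] at h1
      exact_mod_cast h1
    linarith
  have hQ0 : 0 < Q := by linarith
  have hQK1 : 1 ≤ Q ^ K := Real.one_le_rpow (by linarith) (by linarith)
  rw [Real.rpow_mul hQ0.le, Real.rpow_natCast]
  have hS1 : (1 : ℝ) ≤ (shiftProdSet k A u).card := by
    have : (shiftProdSet k A u).Nonempty := by
      obtain ⟨a, ha⟩ := hA
      exact ⟨_, mem_image_of_mem _ (Fintype.mem_piFinset.2 fun _ => ha)⟩
    exact_mod_cast card_pos.2 this
  have hden : 0 < K ^ k * (Q ^ K) ^ k := by positivity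
  set N : ℝ := (A.card : ℝ) with hN
  by_cases hbig : N ^ (k - 1) ≤ K ^ k * (Q ^ K) ^ k
  · exact ((div_le_one hden).2 hbig).trans hS1
  push Not at hbig
  have hNQ : Q ^ K < N := by
    by_contra hcon
    push Not at hcon
    have h1 : N ^ (k - 1) ≤ (Q ^ K) ^ (k - 1) := pow_le_pow_left₀ (by linarith) hcon _
    have h2 : (Q ^ K) ^ (k - 1) ≤ (Q ^ K) ^ k := pow_le_pow_right₀ hQK1 (by omega)
    have h3 : 1 ≤ K ^ k := one_le_pow₀ hK1
    have h4 : 0 < (Q ^ K) ^ k := by positivity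
    nlinarith
  have h9 : (1 + 2 * K) ^ 2 ≤ Q ^ K := by
    have h1 : 1 + K * 2 ≤ (1 + 2 : ℝ) ^ K := one_add_mul_self_le_rpow_one_add (by norm_num) hK1
    have h2 : ((1 + 2 : ℝ) ^ K) ^ 2 = (9 : ℝ) ^ K := by
      rw [← Real.rpow_natCast, ← Real.rpow_mul (by norm_num), mul_comm, Real.rpow_mul (by norm_num)]
      norm_num
    have h3 : (9 : ℝ) ^ K ≤ Q ^ K := Real.rpow_le_rpow (by norm_num) (by linarith) (by linarith)
    rw [← h2] at h3
    refine le_trans ?_ h3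
    exact pow_le_pow_left₀ (by linarith) (by linarith) 2
  have hdK : (dimv A : ℝ) ≤ K := by
    by_contra hcon
    push Not at hcon
    have h1 : ⌊K⌋₊ < dimv A := (Nat.floor_lt (by linarith)).2 hcon
    have h2 := hF' (⌊K⌋₊ + 1) (by omega)
    have h3 := Nat.lt_floor_add_one K
    have h4 := Nat.floor_le (show 0 ≤ K by linarith)
    push_cast at h2
    nlinarith
  have hdK2 : (dimv A : ℝ) + 1 / 2 ≤ K := by
    have h2 := hF' (dimv A) le_rfl
    have h3 : (0 : ℝ) ≤ dimv A := by positivity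
    have h4 : (dimv A : ℝ) * (dimv A + 1) ≤ N / 2 := by nlinarith
    by_contra hcon
    push Not at hcon
    nlinarith
  have hN12 : 12 ≤ N := by
    have : Q ^ (1 : ℝ) ≤ Q ^ K := Real.rpow_le_rpow_of_exponent_le (by linarith) hK1
    rw [Real.rpow_one] at this
    linarith
  -- erase -u
  have hcs := energy_cs k hk (A.erase (-u)) (fun h => h0 (mem_of_mem_erase h)) u hu (notMem_erase _ _)
  have hsubA : A.erase (-u) ⊆ A := erase_subset _ _
  have hsubT : (Fintype.piFinset fun _ : Fin k => A.erase (-u)) ⊆ Fintype.piFinset fun _ : Fin k => A :=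
    Fintype.piFinset_subset _ _ fun _ => hsubA
  have hS : ((shiftProdSet k (A.erase (-u)) u).card : ℝ) ≤ (shiftProdSet k A u).card := by
    exact_mod_cast card_le_card (image_subset_image hsubT)
  have hP : (((Fintype.piFinset fun _ : Fin k => A.erase (-u)).image fun f => ∏ i, f i).card : ℝ) ≤ K ^ k * N := by
    refine le_trans ?_ (pluennecke A h0 hA k K hK)
    exact_mod_cast card_le_card (image_subset_image hsubT)
  have hNe : ((A.erase (-u)).card : ℝ) ≤ N := by rw [hN]; exact_mod_cast card_le_card hsubA
  have hNe' : N - 1 ≤ ((A.erase (-u)).card : ℝ) := by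
    have : A.card ≤ (A.erase (-u)).card + 1 := by
      have := pred_card_le_card_erase (s := A) (a := -u)
      omega
    have : N ≤ ((A.erase (-u)).card : ℝ) + 1 := by rw [hN]; exact_mod_cast this
    linarith
  have hQd : Q ^ dimv (A.erase (-u)) ≤ Q ^ dimv A := pow_le_pow_right₀ (by linarith) (dimv_mono hsubA)
  set S : ℝ := ((shiftProdSet k A u).card : ℝ) with hSdef
  have hmain : (N - 1) ^ (2 * k) ≤ (Q ^ dimv A * 2 * N) ^ k * ((K ^ k * N) * S) := by
    calc (N - 1) ^ (2 * k) ≤ ((A.erase (-u)).card : ℝ) ^ (2 * k) :=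
          pow_le_pow_left₀ (by linarith) hNe' _
      _ ≤ _ := hcs
      _ ≤ _ := by gcongr
  have hlow : (5 / 6 * N ^ 2) ^ k ≤ (N - 1) ^ (2 * k) := by
    rw [pow_mul]
    apply pow_le_pow_left₀ (by positivity)
    nlinarith
  have hQQ : Q ^ dimv A * (12 / 5) ≤ Q ^ K := by
    have h1 : Q ^ ((dimv A : ℝ) + 1 / 2) ≤ Q ^ K := Real.rpow_le_rpow_of_exponent_le (by linarith) hdK2
    rw [Real.rpow_add hQ0, Real.rpow_natCast, ← Real.sqrt_eq_rpow] at h1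
    have h2 : 12 / 5 ≤ √Q := Real.le_sqrt_of_sq_le (by linarith)
    refine le_trans ?_ h1
    gcongr
  rw [div_le_iff₀ hden]
  have hN0 : 0 < N := by linarith
  have hfin : (5 / 6 * N ^ 2) ^ k = N ^ (k - 1) * (N ^ (k + 1) * (5 / 6) ^ k) := by
    rw [mul_pow, ← pow_mul, ← mul_assoc, ← pow_add, mul_comm]
    congr 2
    omega
  have hfin2 : (Q ^ dimv A * 2 * N) ^ k * ((K ^ k * N) * S) =
      ((Q ^ dimv A * (12 / 5)) ^ k * K ^ k * S) * (N ^ (k + 1) * (5 / 6) ^ k) := by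
    have : Q ^ dimv A * 2 * N = (Q ^ dimv A * (12 / 5)) * N * (5 / 6) := by ring
    rw [this, mul_pow, mul_pow _ N]
    ring
  have hle : N ^ (k - 1) ≤ (Q ^ dimv A * (12 / 5)) ^ k * K ^ k * S := by
    have h1 : 0 < N ^ (k + 1) * (5 / 6 : ℝ) ^ k := by positivity
    refine le_of_mul_le_mul_right ?_ h1
    rw [← hfin, ← hfin2]
    exact hlow.trans hmain
  calc N ^ (k - 1) ≤ _ := hle
    _ ≤ (Q ^ K) ^ k * K ^ k * S := by gcongr
    _ = _ := by ring
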